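/- Discount rate of the static opaque selling policy (Proposition 11, part (iii)): Let R^s be the replenishment cycle length and D^s = Σ_{t=1}^{R^s} f_t·ω(t) the per-cycle discount count of the static opaque policy at stock level S. Then there exist constants 0 < c₁ ≤ c₂, depending only on N and q, and S₀ ∈ ℕ such that for all S ≥ S₀: c₁·q·√((log S)/S) ≤ E[D^s]/E[R^s] ≤ c₂·q·√((log S)/S). -/

import Mathlib

/-!
Write `T = N(S-1)+1`, `c = c_s`, `L = c√(T log T)`, and let `k ≈ T - L` be the number of steps
before flexing starts.

*Upper bound.* Every path has at most `T - k ≤ L + 1` steps at which flexing is allowed, so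
`D ≤ L + 1`; and every path has `R ≥ S`, as the maximum load grows by at most one per step.
Hence `E[D]/E[R] ≤ (L+1)/S`, which is of order `√(log S / S)`.

*Lower bound.* Put `a = L/(3N)` and `m = ⌊a⌋`. At time `k` the loads `x_i(k)` are sums of `k`
independent centred indicators plus `k/N`, so `E[(x_i(k) - k/N)²] ≤ k`. If
`|x_i(k) - k/N| < a` for all `i`, then at time `k + m` every load is less than
`k/N + 2a < T/N ≤ S`, so the cycle has not ended and all flex balls among steps
`k, …, k+m-1` are discounted. On the complement, `∑ i, (x_i(k) - k/N)²/a² ≥ 1`. Thus pointwise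
`D ≥ ∑_{k ≤ t < k+m} f_t - m ∑ i, (x_i(k) - k/N)²/a²` (`cycleFlexCount_ge`), and taking expectations
`E[D] ≥ m (q - N k / a²)`. Since `N k / a² = O(1 / log T)`, this is at least `m q / 2` eventually,
which together with `R ≤ T` gives the claim.
-/

attribute [local instance] Classical.propDecidable

/-- An arrival type: (is-flex-ball, preferred bin, flex set). -/
abbrev Arrival (N : ℕ) := Bool × Fin N × Finset (Fin N)

/-- Mass of a single arrival: `f ~ Bernoulli(q)`, `p` uniform on `Fin N`,
`F` uniform on the 2-element subsets of `Fin N`, mutually independent. -/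
noncomputable def arrivalProb (N : ℕ) (q : ℝ) (a : Arrival N) : ℝ :=
  (if a.1 then q else 1 - q) * (1 / (N : ℝ)) *
    (if a.2.2.card = 2 then 1 / (N.choose 2 : ℝ) else 0)

/-- Mass of a sequence of `T` i.i.d. arrivals. -/
noncomputable def seqMass (N T : ℕ) (q : ℝ) (xs : Fin T → Arrival N) : ℝ :=
  ∏ t, arrivalProb N q (xs t)

/-- Expectation of a real random variable on the canonical space of `T` arrivals. -/
noncomputable def expec (N T : ℕ) (q : ℝ) (X : (Fin T → Arrival N) → ℝ) : ℝ :=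
  ∑ xs : Fin T → Arrival N, seqMass N T q xs * X xs

/-- Probability of an event on the canonical space of `T` arrivals. -/
noncomputable def prob (N T : ℕ) (q : ℝ) (A : (Fin T → Arrival N) → Prop) : ℝ :=
  ∑ xs : Fin T → Arrival N, if A xs then seqMass N T q xs else 0

/-- The least-loaded bin in `F` (ties broken in favor of the smallest index). -/
noncomputable def argminBin {N : ℕ} [NeZero N] (x : Fin N → ℕ) (F : Finset (Fin N)) : Fin N :=
  if hF : (F.filter fun i => ∀ j ∈ F, x i ≤ x j).Nonempty
  then (F.filter fun i => ∀ j ∈ F, x i ≤ x j).min' hF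
  else 0

/-- One step of the greedy (least-loaded) allocation: if the ball is a flex ball and
flexing is exerted, it goes to the least-loaded bin of its flex set (lexicographic
tie-breaking); otherwise it goes to its preferred bin. -/
noncomputable def greedyStep {N : ℕ} [NeZero N] (flex : Bool) (a : Arrival N)
    (x : Fin N → ℕ) : Fin N → ℕ :=
  fun i => if i = (if a.1 && flex then argminBin x a.2.2 else a.2.1) then x i + 1 else x i

/-- Load process under a flexing rule `dec` (which may depend on the whole realization,
the time, and the current loads), with greedy placement of flexed flex balls. -/
noncomputable def greedyLoads {N T : ℕ} [NeZero N]
    (dec : (Fin T → Arrival N) → ℕ → (Fin N → ℕ) → Bool)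
    (xs : Fin T → Arrival N) : ℕ → Fin N → ℕ
  | 0 => fun _ => 0
  | t + 1 =>
    if h : t < T then
      greedyStep (dec xs t (greedyLoads dec xs t)) (xs ⟨t, h⟩) (greedyLoads dec xs t)
    else greedyLoads dec xs t

/-- The maximum load over all bins. -/
noncomputable def maxLoad {N : ℕ} (x : Fin N → ℕ) : ℕ := Finset.univ.sup x

/-- `Gap(t)` : maximum load minus the average load `t/N`. -/
noncomputable def gap {N : ℕ} (x : Fin N → ℕ) (t : ℕ) : ℝ :=
  (maxLoad x : ℝ) - (t : ℝ) / (N : ℝ)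

/-- Number of flexed balls `M = ∑_t f_t ω(t)`. -/
noncomputable def numFlexed {N T : ℕ} [NeZero N]
    (dec : (Fin T → Arrival N) → ℕ → (Fin N → ℕ) → Bool) (xs : Fin T → Arrival N) : ℕ :=
  ∑ t : Fin T, if (xs t).1 && dec xs (t : ℕ) (greedyLoads dec xs (t : ℕ)) then 1 else 0

/-- Flexing rule of a "static"-type policy: flex exactly from period
`T - c·√(T log T)` on (ball `t` corresponds to step index `t-1`). -/
noncomputable def lateDec (N T : ℕ) (c : ℝ) :
    (Fin T → Arrival N) → ℕ → (Fin N → ℕ) → Bool :=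
  fun _ s _ =>
    if (T : ℝ) - c * Real.sqrt ((T : ℝ) * Real.log (T : ℝ)) ≤ ((s : ℝ) + 1) then true else false

/-- Flexing rule of the dynamic policy: flex at period `t = s+1` iff the current gap
`Gap(t-1)` is at least `a_d (T - t) q / N` with `a_d = 1/(5 C(N,2))`. -/
noncomputable def dynDec (N T : ℕ) (q : ℝ) :
    (Fin T → Arrival N) → ℕ → (Fin N → ℕ) → Bool :=
  fun _ s x =>
    if (1 / (5 * (N.choose 2 : ℝ))) * ((T : ℝ) - ((s : ℝ) + 1)) * q / (N : ℝ) ≤ gap x s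
    then true else false

/-- First time (within horizon `T`) at which the maximum load equals `S`. -/
noncomputable def hitTime {N : ℕ} (T S : ℕ) (x : ℕ → Fin N → ℕ) : ℕ :=
  if h : ((Finset.range (T + 1)).filter fun t => maxLoad (x t) = S).Nonempty
  then ((Finset.range (T + 1)).filter fun t => maxLoad (x t) = S).min' h
  else T

/-- The dynamic opaque policy: the flag records whether the trigger condition
`Gap(t) ≥ c_d (T-t) q / N` (with `c_d = 1/(10 C(N,2))`) has held at some time `≤ t`;
from then on every flex ball is flexed (greedy placement). Returns (flag, loads). -/
noncomputable def dynOpaque (N T : ℕ) [NeZero N] (q : ℝ) (xs : Fin T → Arrival N) :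
    ℕ → Bool × (Fin N → ℕ)
  | 0 =>
    (if (1 / (10 * (N.choose 2 : ℝ))) * (T : ℝ) * q / (N : ℝ) ≤ 0 then true else false,
      fun _ => 0)
  | t + 1 =>
    let p := dynOpaque N T q xs t
    let x' := if h : t < T then greedyStep p.1 (xs ⟨t, h⟩) p.2 else p.2
    (p.1 ||
      (if (1 / (10 * (N.choose 2 : ℝ))) * ((T : ℝ) - ((t : ℝ) + 1)) * q / (N : ℝ) ≤
          gap x' (t + 1)
       then true else false),
     x')

/-- Number of flexed balls `D = ∑_{t=1}^{R} f_t ω(t)` during one replenishment cycle,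
for a policy given by the flexing rule `dec`. -/
noncomputable def cycleFlexCount (N T : ℕ) [NeZero N]
    (dec : (Fin T → Arrival N) → ℕ → (Fin N → ℕ) → Bool) (S : ℕ)
    (xs : Fin T → Arrival N) : ℕ :=
  ∑ t ∈ Finset.range (hitTime T S (greedyLoads dec xs)),
    if h : t < T then (if (xs ⟨t, h⟩).1 && dec xs t (greedyLoads dec xs t) then 1 else 0)
    else 0

/-- Number of flexed balls during one replenishment cycle of the dynamic opaque policy. -/
noncomputable def dynFlexCount (N T : ℕ) [NeZero N] (q : ℝ) (S : ℕ)
    (xs : Fin T → Arrival N) : ℕ :=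
  ∑ t ∈ Finset.range (hitTime T S fun u => (dynOpaque N T q xs u).2),
    if h : t < T then (if (xs ⟨t, h⟩).1 && (dynOpaque N T q xs t).1 then 1 else 0) else 0

/-- The static-opaque flexing threshold constant `c_s = 2√6 N(N-1)(N+1)/q + 4N`. -/
noncomputable def csOpaque (N : ℕ) (q : ℝ) : ℝ :=
  2 * Real.sqrt 6 * (N : ℝ) * ((N : ℝ) - 1) * ((N : ℝ) + 1) / q + 4 * (N : ℝ)

/-- Expected cycle length `E[R^s]` of the static opaque policy at stock level `S`. -/
noncomputable def staticER (N : ℕ) [NeZero N] (q : ℝ) (S : ℕ) : ℝ :=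
  expec N (N * (S - 1) + 1) q fun xs =>
    (hitTime (N * (S - 1) + 1) S
      (greedyLoads (lateDec N (N * (S - 1) + 1) (csOpaque N q)) xs) : ℝ)

/-- Second moment `E[(R^s)²]` of the static opaque cycle length at stock level `S`. -/
noncomputable def staticER2 (N : ℕ) [NeZero N] (q : ℝ) (S : ℕ) : ℝ :=
  expec N (N * (S - 1) + 1) q fun xs =>
    ((hitTime (N * (S - 1) + 1) S
      (greedyLoads (lateDec N (N * (S - 1) + 1) (csOpaque N q)) xs) : ℝ)) ^ 2

/-- Expected per-cycle discount count `E[D^s]` of the static opaque policy. -/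
noncomputable def staticED (N : ℕ) [NeZero N] (q : ℝ) (S : ℕ) : ℝ :=
  expec N (N * (S - 1) + 1) q fun xs =>
    (cycleFlexCount N (N * (S - 1) + 1)
      (lateDec N (N * (S - 1) + 1) (csOpaque N q)) S xs : ℝ)

/-- Long-run average cost `C^s` of the static opaque policy. -/
noncomputable def staticCost (N : ℕ) [NeZero N] (q K h δ : ℝ) (S : ℕ) : ℝ :=
  K / staticER N q S +
    (h / 2) * (2 * (N : ℝ) * (S : ℝ) + 1 - staticER2 N q S / staticER N q S) +
    δ * staticED N q S / staticER N q S

/-! ### Expectations on the space of arrival sequences -/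

lemma arrivalProb_nonneg {N : ℕ} {q : ℝ} (hq0 : 0 < q) (hq1 : q ≤ 1) (a : Arrival N) :
    0 ≤ arrivalProb N q a := by
  have : 0 ≤ 1 - q := by linarith
  unfold arrivalProb
  split_ifs <;> positivity

lemma seqMass_nonneg {N T : ℕ} {q : ℝ} (hq0 : 0 < q) (hq1 : q ≤ 1) (xs : Fin T → Arrival N) :
    0 ≤ seqMass N T q xs :=
  Finset.prod_nonneg fun _ _ => arrivalProb_nonneg hq0 hq1 _

/-- The flex set is irrelevant to the expectation of a function of the flag and the preferred
bin, and these two are independent. -/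
lemma sum_arrivalProb_mul {N : ℕ} (hN : 2 ≤ N) (q : ℝ) (g : Bool → Fin N → ℝ) :
    ∑ a : Arrival N, arrivalProb N q a * g a.1 a.2.1 =
      ∑ i : Fin N, (1 / (N : ℝ)) * (q * g true i + (1 - q) * g false i) := by
  have hc : ((N.choose 2 : ℕ) : ℝ) ≠ 0 := by
    exact_mod_cast (Nat.choose_pos hN).ne'
  have hF : ∑ F : Finset (Fin N), (if F.card = 2 then 1 / (N.choose 2 : ℝ) else 0) = 1 := by
    rw [← Finset.sum_filter, Finset.sum_const, nsmul_eq_mul]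
    have : (Finset.univ.filter fun F : Finset (Fin N) => F.card = 2).card = N.choose 2 := by
      have h := Finset.card_powersetCard 2 (Finset.univ : Finset (Fin N))
      rw [Finset.card_univ, Fintype.card_fin] at h
      rw [← h]
      congr 1
      ext F
      simp [Finset.mem_powersetCard]
    rw [this]
    field_simp
  have key : ∀ (b : Bool) (i : Fin N),
      ∑ F : Finset (Fin N), arrivalProb N q (b, i, F) * g b i =
        (if b then q else 1 - q) * (1 / (N : ℝ)) * g b i := by
    intro b i
    unfold arrivalProb
    simp only
    rw [← Finset.sum_mul]
    have h := Finset.mul_sum Finset.univ (fun F : Finset (Fin N) =>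
      if F.card = 2 then 1 / (N.choose 2 : ℝ) else 0) ((if b then q else 1 - q) * (1 / (N : ℝ)))
    rw [hF, mul_one] at h
    rw [h]
  rw [Fintype.sum_prod_type]
  simp only [Fintype.sum_prod_type, key, Fintype.sum_bool]
  rw [← Finset.sum_add_distrib]
  refine Finset.sum_congr rfl fun i _ => ?_
  simp
  ring

lemma sum_arrivalProb {N : ℕ} (hN : 2 ≤ N) (q : ℝ) : ∑ a : Arrival N, arrivalProb N q a = 1 := by
  have h := sum_arrivalProb_mul hN q (fun _ _ => 1)
  have : (N : ℝ) ≠ 0 := by positivity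
  simp only [mul_one] at h
  rw [h]
  simp
  field_simp

/-- Independence: the expectation of a product over time steps factorizes. -/
lemma expec_prod (N T : ℕ) (q : ℝ) (g : Fin T → Arrival N → ℝ) :
    expec N T q (fun xs => ∏ t, g t (xs t)) = ∏ t, ∑ a, arrivalProb N q a * g t a := by
  unfold expec seqMass
  rw [Finset.prod_univ_sum, Fintype.piFinset_univ]
  exact Finset.sum_congr rfl fun xs _ => Finset.prod_mul_distrib.symm

lemma expec_two {N T : ℕ} (hN : 2 ≤ N) (q : ℝ) {s t : Fin T} (hst : s ≠ t)
    (g h : Arrival N → ℝ) :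
    expec N T q (fun xs => g (xs s) * h (xs t)) =
      (∑ a, arrivalProb N q a * g a) * ∑ a, arrivalProb N q a * h a := by
  have e := expec_prod N T q
    (fun u a => (if u = s then g a else 1) * (if u = t then h a else 1))
  have l : ∀ xs : Fin T → Arrival N,
      ∏ u, ((if u = s then g (xs u) else 1) * (if u = t then h (xs u) else 1)) =
        g (xs s) * h (xs t) := by
    intro xs
    rw [Finset.prod_mul_distrib]
    simp
  have r : ∏ u, (∑ a, arrivalProb N q a *
      ((if u = s then g a else 1) * (if u = t then h a else 1))) =
      ∏ u, ((if u = s then ∑ a, arrivalProb N q a * g a else 1) *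
        (if u = t then ∑ a, arrivalProb N q a * h a else 1)) := by
    refine Finset.prod_congr rfl fun u _ => ?_
    by_cases h1 : u = s
    · have h2 : u ≠ t := fun h2 => hst (h1 ▸ h2)
      simp [h1, hst]
    · by_cases h2 : u = t
      · simp [h2, hst.symm]
      · simp [h1, h2, sum_arrivalProb hN]
  simp only [l] at e
  rw [e, r, Finset.prod_mul_distrib]
  simp

lemma expec_one {N T : ℕ} (hN : 2 ≤ N) (q : ℝ) (s : Fin T) (g : Arrival N → ℝ) :
    expec N T q (fun xs => g (xs s)) = ∑ a, arrivalProb N q a * g a := by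
  have e := expec_prod N T q (fun u a => if u = s then g a else 1)
  have r : ∏ u, (∑ a, arrivalProb N q a * (if u = s then g a else 1)) =
      ∏ u, (if u = s then ∑ a, arrivalProb N q a * g a else 1) := by
    refine Finset.prod_congr rfl fun u _ => ?_
    by_cases h1 : u = s <;> simp [h1, sum_arrivalProb hN]
  rw [r] at e
  simpa using e

lemma expec_const {N : ℕ} (hN : 2 ≤ N) (T : ℕ) (q c : ℝ) :
    expec N T q (fun _ => c) = c := by
  have e := expec_prod N T q (fun _ _ => 1)
  simp only [mul_one, sum_arrivalProb hN, Finset.prod_const_one] at e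
  unfold expec at *
  simp only [mul_one] at e
  rw [← Finset.sum_mul, e, one_mul]

lemma expec_mono {N T : ℕ} {q : ℝ} (hq0 : 0 < q) (hq1 : q ≤ 1)
    {X Y : (Fin T → Arrival N) → ℝ} (h : ∀ xs, X xs ≤ Y xs) :
    expec N T q X ≤ expec N T q Y :=
  Finset.sum_le_sum fun xs _ => mul_le_mul_of_nonneg_left (h xs) (seqMass_nonneg hq0 hq1 xs)

lemma expec_sum {ι : Type*} (N T : ℕ) (q : ℝ) (A : Finset ι)
    (X : ι → (Fin T → Arrival N) → ℝ) :
    expec N T q (fun xs => ∑ i ∈ A, X i xs) = ∑ i ∈ A, expec N T q (X i) := by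
  unfold expec
  simp only [Finset.mul_sum]
  exact Finset.sum_comm

lemma expec_sub (N T : ℕ) (q : ℝ) (X Y : (Fin T → Arrival N) → ℝ) :
    expec N T q (fun xs => X xs - Y xs) = expec N T q X - expec N T q Y := by
  simp only [expec, mul_sub, Finset.sum_sub_distrib]

lemma expec_const_mul (N T : ℕ) (q c : ℝ) (X : (Fin T → Arrival N) → ℝ) :
    expec N T q (fun xs => c * X xs) = c * expec N T q X := by
  simp only [expec, Finset.mul_sum]
  exact Finset.sum_congr rfl fun _ _ => by ring

lemma expec_flex {N T : ℕ} (hN : 2 ≤ N) (q : ℝ) (s : Fin T) :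
    expec N T q (fun xs => if (xs s).1 then (1 : ℝ) else 0) = q := by
  rw [expec_one hN q s (fun a => if a.1 then (1 : ℝ) else 0)]
  have h := sum_arrivalProb_mul hN q (fun b _ => if b then (1 : ℝ) else 0)
  have : (N : ℝ) ≠ 0 := by positivity
  rw [h]
  simp
  field_simp

/-- The centred indicator that the preferred bin is `i`. -/
noncomputable def prefDev {N : ℕ} (i : Fin N) (a : Arrival N) : ℝ :=
  (if a.2.1 = i then 1 else 0) - 1 / (N : ℝ)

lemma prefDev_mean {N : ℕ} (hN : 2 ≤ N) (q : ℝ) (i : Fin N) :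
    ∑ a : Arrival N, arrivalProb N q a * prefDev i a = 0 := by
  have h := sum_arrivalProb_mul hN q (fun _ j => (if j = i then (1 : ℝ) else 0) - 1 / (N : ℝ))
  have : (N : ℝ) ≠ 0 := by positivity
  unfold prefDev
  rw [h, ← Finset.mul_sum]
  have e : ∀ j : Fin N, q * ((if j = i then (1 : ℝ) else 0) - 1 / (N : ℝ)) +
      (1 - q) * ((if j = i then (1 : ℝ) else 0) - 1 / (N : ℝ)) =
      (if j = i then (1 : ℝ) else 0) - 1 / (N : ℝ) := fun j => by ring
  simp only [e, Finset.sum_sub_distrib]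
  simp
  right
  field_simp
  simp

lemma prefDev_sq_le {N : ℕ} (hN : 2 ≤ N) (i : Fin N) (a : Arrival N) :
    prefDev i a * prefDev i a ≤ 1 := by
  have h1 : (1 : ℝ) / N ≤ 1 := by
    rw [div_le_one (by positivity)]
    exact_mod_cast (by omega : 1 ≤ N)
  have h0 : (0 : ℝ) ≤ 1 / N := by positivity
  unfold prefDev
  split_ifs <;> nlinarith

/-- Variance bound for the number of balls preferring bin `i`: off-diagonal terms vanish. -/
lemma expec_sum_sq_le {N T : ℕ} (hN : 2 ≤ N) {q : ℝ} (hq0 : 0 < q) (hq1 : q ≤ 1) (i : Fin N)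
    (A : Finset (Fin T)) :
    expec N T q (fun xs => (∑ s ∈ A, prefDev i (xs s)) ^ 2) ≤ A.card := by
  have e : ∀ xs : Fin T → Arrival N, (∑ s ∈ A, prefDev i (xs s)) ^ 2 =
      ∑ s ∈ A, ∑ t ∈ A, prefDev i (xs s) * prefDev i (xs t) := fun xs => by
    rw [sq, Finset.sum_mul_sum]
  simp only [e, expec_sum]
  have : ∀ s ∈ A, ∑ t ∈ A, expec N T q (fun xs => prefDev i (xs s) * prefDev i (xs t)) ≤ 1 := by
    intro s hs
    rw [Finset.sum_eq_single_of_mem s hs]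
    · calc _ ≤ expec N T q (fun _ => 1) := expec_mono hq0 hq1 fun xs => prefDev_sq_le hN i _
        _ = 1 := expec_const hN T q 1
    · intro t _ hts
      rw [expec_two hN q hts.symm, prefDev_mean hN, zero_mul]
  calc _ ≤ ∑ s ∈ A, (1 : ℝ) := Finset.sum_le_sum this
    _ = A.card := by simp

/-! ### Pathwise properties of the load process -/

section loads

variable {N T : ℕ} [NeZero N] (dec : (Fin T → Arrival N) → ℕ → (Fin N → ℕ) → Bool)
  (xs : Fin T → Arrival N)

lemma greedyLoads_step (t : ℕ) (i : Fin N) :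
    greedyLoads dec xs t i ≤ greedyLoads dec xs (t + 1) i ∧
      greedyLoads dec xs (t + 1) i ≤ greedyLoads dec xs t i + 1 := by
  rw [greedyLoads]
  split_ifs
  · unfold greedyStep
    split_ifs <;> omega
  · omega

lemma greedyLoads_mono (i : Fin N) : Monotone fun t => greedyLoads dec xs t i :=
  monotone_nat_of_le_succ fun t => (greedyLoads_step dec xs t i).1

lemma greedyLoads_add_le (t j : ℕ) (i : Fin N) :
    greedyLoads dec xs (t + j) i ≤ greedyLoads dec xs t i + j := by
  induction j with
  | zero => simp
  | succ j ih =>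
    have := (greedyLoads_step dec xs (t + j) i).2
    rw [← add_assoc]
    omega

lemma hitTime_le {N T : ℕ} (S : ℕ) (x : ℕ → Fin N → ℕ) : hitTime T S x ≤ T := by
  unfold hitTime
  split_ifs with h
  · have := Finset.min'_mem _ h
    rw [Finset.mem_filter, Finset.mem_range] at this
    omega
  · exact le_rfl

lemma le_hitTime {N T S r : ℕ} {x : ℕ → Fin N → ℕ} (hr : r ≤ T)
    (h : ∀ t < r, maxLoad (x t) < S) : r ≤ hitTime T S x := by
  unfold hitTime
  split_ifs with hne
  · refine Finset.le_min' _ _ _ fun t ht => ?_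
    by_contra hlt
    have := h t (by omega)
    have := (Finset.mem_filter.1 ht).2
    omega
  · exact hr

lemma stock_le_hitTime {S : ℕ} (hS : S ≤ T) : S ≤ hitTime T S (greedyLoads dec xs) := by
  refine le_hitTime hS fun t ht => ?_
  refine lt_of_le_of_lt (Finset.sup_le fun i _ => ?_) ht
  have := greedyLoads_add_le dec xs 0 t i
  simpa [greedyLoads] using this

/-- While no ball is flexed, the loads count the preferred bins. -/
lemma greedyLoads_eq_sum {k : ℕ} (hk : k ≤ T) (hdec : ∀ s < k, ∀ x, dec xs s x = false)
    (i : Fin N) :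
    (greedyLoads dec xs k i : ℝ) - (k : ℝ) / N =
      ∑ s ∈ Finset.univ.filter (fun s : Fin T => (s : ℕ) < k), prefDev i (xs s) := by
  induction k with
  | zero => simp [greedyLoads]
  | succ k ih =>
    have hkT : k < T := hk
    have hf : (Finset.univ.filter fun s : Fin T => (s : ℕ) < k + 1) =
        insert ⟨k, hkT⟩ (Finset.univ.filter fun s : Fin T => (s : ℕ) < k) := by
      ext s
      simp [Fin.ext_iff]
      omega
    rw [hf, Finset.sum_insert (by simp), ← ih hkT.le fun s hs => hdec s (by omega)]
    rw [greedyLoads, dif_pos hkT, hdec k (by omega)]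
    unfold greedyStep prefDev
    simp only [Bool.and_false, Bool.false_eq_true, if_false, eq_comm (a := i)]
    split_ifs <;> push_cast <;> ring

/-- If no load deviates from its mean by `a` at the time `k` when flexing starts, then the next
`m` steps all fall within the cycle, so their flex balls are all discounted; otherwise the subtracted term is at least `m`. -/
lemma cycleFlexCount_ge {S k m : ℕ} {a : ℝ} (ha : 0 < a) (hkm : k + m ≤ T)
    (hlate : ∀ s, k ≤ s → ∀ x, dec xs s x = true)
    (hS : (k : ℝ) / N + a + m ≤ S) :
    (∑ s ∈ Finset.univ.filter (fun s : Fin T => k ≤ (s : ℕ) ∧ (s : ℕ) < k + m),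
        if (xs s).1 then (1 : ℝ) else 0) -
      (m / a ^ 2) * ∑ i : Fin N, ((greedyLoads dec xs k i : ℝ) - (k : ℝ) / N) ^ 2 ≤
      (cycleFlexCount N T dec S xs : ℝ) := by
  by_cases hE : ∀ i, |(greedyLoads dec xs k i : ℝ) - (k : ℝ) / N| < a
  · have hhit : k + m ≤ hitTime T S (greedyLoads dec xs) := by
      refine le_hitTime hkm fun t ht => ?_
      have hb : ∀ i, greedyLoads dec xs t i < S := by
        intro i
        have h1 : greedyLoads dec xs t i ≤ greedyLoads dec xs k i + m :=
          (greedyLoads_mono dec xs i ht.le).trans (greedyLoads_add_le dec xs k m i)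
        have h2 := (abs_lt.1 (hE i)).2
        have h3 : (greedyLoads dec xs t i : ℝ) ≤ greedyLoads dec xs k i + m := by exact_mod_cast h1
        have : (greedyLoads dec xs t i : ℝ) < S := by linarith
        exact_mod_cast this
      exact (Finset.sup_lt_iff (lt_of_le_of_lt (Nat.zero_le _) (hb 0))).2 fun i _ => hb i
    have hsum : (∑ s ∈ Finset.univ.filter (fun s : Fin T => k ≤ (s : ℕ) ∧ (s : ℕ) < k + m),
        if (xs s).1 then 1 else 0) ≤ cycleFlexCount N T dec S xs := by
      unfold cycleFlexCount
      have hinj : Set.InjOn (fun s : Fin T => (s : ℕ))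
          (Finset.univ.filter (fun s : Fin T => k ≤ (s : ℕ) ∧ (s : ℕ) < k + m)) :=
        fun _ _ _ _ h => Fin.ext h
      calc _ = ∑ t ∈ (Finset.univ.filter
            (fun s : Fin T => k ≤ (s : ℕ) ∧ (s : ℕ) < k + m)).image (fun s : Fin T => (s : ℕ)),
              (if h : t < T then
                (if (xs ⟨t, h⟩).1 && dec xs t (greedyLoads dec xs t) then 1 else 0) else 0) := by
            rw [Finset.sum_image hinj]
            refine Finset.sum_congr rfl fun s hs => ?_
            rw [dif_pos s.2, hlate _ (Finset.mem_filter.1 hs).2.1]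
            simp
        _ ≤ _ := by
            refine Finset.sum_le_sum_of_subset fun t ht => ?_
            obtain ⟨s, hs, rfl⟩ := Finset.mem_image.1 ht
            have := (Finset.mem_filter.1 hs).2
            exact Finset.mem_range.2 (by omega)
    have h0 : 0 ≤ (m / a ^ 2) *
        ∑ i : Fin N, ((greedyLoads dec xs k i : ℝ) - (k : ℝ) / N) ^ 2 := by positivity
    have hsum' : (∑ s ∈ Finset.univ.filter (fun s : Fin T => k ≤ (s : ℕ) ∧ (s : ℕ) < k + m),
        if (xs s).1 then (1 : ℝ) else 0) ≤ cycleFlexCount N T dec S xs := by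
      exact_mod_cast hsum
    linarith
  · push Not at hE
    obtain ⟨i, hi⟩ := hE
    have h1 : a ^ 2 ≤ ∑ i : Fin N, ((greedyLoads dec xs k i : ℝ) - (k : ℝ) / N) ^ 2 := by
      refine le_trans ?_ (Finset.single_le_sum (fun j _ => sq_nonneg _) (Finset.mem_univ i))
      rw [← sq_abs ((greedyLoads dec xs k i : ℝ) - (k : ℝ) / N)]
      gcongr
    have h2 : (m : ℝ) ≤ (m / a ^ 2) *
        ∑ i : Fin N, ((greedyLoads dec xs k i : ℝ) - (k : ℝ) / N) ^ 2 := by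
      calc (m : ℝ) = m / a ^ 2 * a ^ 2 := by field_simp
        _ ≤ _ := by gcongr
    have h3 : (∑ s ∈ Finset.univ.filter (fun s : Fin T => k ≤ (s : ℕ) ∧ (s : ℕ) < k + m),
        if (xs s).1 then (1 : ℝ) else 0) ≤ m := by
      have hcard : (Finset.univ.filter
          (fun s : Fin T => k ≤ (s : ℕ) ∧ (s : ℕ) < k + m)).card ≤ m := by
        calc _ ≤ (Finset.Ico k (k + m)).card :=
              Finset.card_le_card_of_injOn (fun s : Fin T => (s : ℕ))
                (fun s hs => by simpa using hs) (fun _ _ _ _ h => Fin.ext h)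
          _ = m := by simp
      calc _ ≤ ∑ s ∈ Finset.univ.filter (fun s : Fin T => k ≤ (s : ℕ) ∧ (s : ℕ) < k + m),
            (1 : ℝ) := Finset.sum_le_sum fun s _ => by split_ifs <;> norm_num
        _ = ((Finset.univ.filter
          (fun s : Fin T => k ≤ (s : ℕ) ∧ (s : ℕ) < k + m)).card : ℝ) := by simp
        _ ≤ m := by exact_mod_cast hcard
    have h4 : (0 : ℝ) ≤ cycleFlexCount N T dec S xs := Nat.cast_nonneg _
    linarith

lemma cycleFlexCount_le {S k : ℕ} (hearly : ∀ s < k, ∀ x, dec xs s x = false) :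
    cycleFlexCount N T dec S xs ≤ T - k := by
  unfold cycleFlexCount
  calc _ ≤ ∑ t ∈ Finset.range T, (if k ≤ t then 1 else 0) := by
        refine (Finset.sum_le_sum_of_subset
          (Finset.range_subset_range.2 (hitTime_le S _))).trans ?_
        refine Finset.sum_le_sum fun t _ => ?_
        by_cases hkt : k ≤ t
        · split_ifs <;> simp
        · simp [hearly t (by omega)]
    _ = ((Finset.range T).filter fun t => k ≤ t).card := by simp
    _ ≤ (Finset.Ico k T).card := Finset.card_le_card fun t ht => by
        simp only [Finset.mem_filter, Finset.mem_range] at ht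
        exact Finset.mem_Ico.2 ⟨ht.2, ht.1⟩
    _ = T - k := by simp

end loads

/-! ### Bounds on the two expectations -/

/-- Lower bound on the expected discount count for a rule that starts flexing at step `k`. -/
lemma expec_cycleFlexCount_ge {N T : ℕ} [NeZero N] (hN : 2 ≤ N) {q : ℝ} (hq0 : 0 < q)
    (hq1 : q ≤ 1) (dec : (Fin T → Arrival N) → ℕ → (Fin N → ℕ) → Bool)
    {S k m : ℕ} {a : ℝ} (ha : 0 < a) (hkm : k + m ≤ T)
    (hearly : ∀ xs, ∀ s < k, ∀ x, dec xs s x = false)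
    (hlate : ∀ xs s, k ≤ s → ∀ x, dec xs s x = true)
    (hS : (k : ℝ) / N + a + m ≤ S) :
    m * (q - N * k / a ^ 2) ≤
      expec N T q (fun xs => (cycleFlexCount N T dec S xs : ℝ)) := by
  refine le_trans ?_ (expec_mono hq0 hq1 fun xs =>
    cycleFlexCount_ge dec xs ha hkm (hlate xs) hS)
  rw [expec_sub, expec_sum, expec_const_mul, expec_sum]
  simp only [expec_flex hN]
  have hinj : ∀ r : ℕ, r ≤ T →
      (Finset.univ.filter (fun s : Fin T => (s : ℕ) < r)).card = r := by
    intro r hr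
    have : (Finset.univ.filter (fun s : Fin T => (s : ℕ) < r)).map Fin.valEmbedding =
        Finset.range r := by
      ext t
      simp only [Finset.mem_map, Finset.mem_filter, Finset.mem_univ, true_and,
        Fin.valEmbedding_apply, Finset.mem_range]
      exact ⟨fun ⟨s, hs, e⟩ => e ▸ hs, fun h => ⟨⟨t, by omega⟩, h, rfl⟩⟩
    rw [← Finset.card_map Fin.valEmbedding, this, Finset.card_range]
  have hcard : (Finset.univ.filter
      (fun s : Fin T => k ≤ (s : ℕ) ∧ (s : ℕ) < k + m)).card = m := by
    have h1 : (Finset.univ.filter (fun s : Fin T => k ≤ (s : ℕ) ∧ (s : ℕ) < k + m)) =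
        Finset.univ.filter (fun s : Fin T => (s : ℕ) < k + m) \
          Finset.univ.filter (fun s : Fin T => (s : ℕ) < k) := by
      ext s
      simp
      omega
    rw [h1, Finset.card_sdiff_of_subset, hinj _ hkm, hinj k (by omega)]
    · omega
    · intro s hs
      simp only [Finset.mem_filter, Finset.mem_univ, true_and] at hs ⊢
      omega
  have hvar : ∑ i : Fin N, expec N T q
      (fun xs => ((greedyLoads dec xs k i : ℝ) - (k : ℝ) / N) ^ 2) ≤ N * k := by
    calc _ ≤ ∑ _i : Fin N, (k : ℝ) := by
          refine Finset.sum_le_sum fun i _ => ?_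
          have h := expec_sum_sq_le hN hq0 hq1 i (Finset.univ.filter fun s : Fin T => (s : ℕ) < k)
          rw [hinj k (by omega)] at h
          refine le_trans (le_of_eq ?_) h
          congr 1
          ext xs
          rw [greedyLoads_eq_sum dec xs (by omega) (hearly xs)]
      _ = N * k := by simp
  rw [Finset.sum_const, hcard, nsmul_eq_mul]
  have : (m / a ^ 2) * ∑ i : Fin N, expec N T q
      (fun xs => ((greedyLoads dec xs k i : ℝ) - (k : ℝ) / N) ^ 2) ≤ m / a ^ 2 * (N * k) := by
    gcongr
  calc m * (q - N * k / a ^ 2) = m * q - m / a ^ 2 * (N * k) := by ring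
    _ ≤ _ := by linarith

lemma four_mul_le_csOpaque {N : ℕ} (hN : 2 ≤ N) {q : ℝ} (hq0 : 0 < q) :
    4 * (N : ℝ) ≤ csOpaque N q := by
  have : (1 : ℝ) ≤ N := by exact_mod_cast (by omega : 1 ≤ N)
  have h : 0 ≤ 2 * Real.sqrt 6 * (N : ℝ) * ((N : ℝ) - 1) * ((N : ℝ) + 1) / q := by
    have : (0 : ℝ) ≤ N - 1 := by linarith
    positivity
  unfold csOpaque
  linarith

/-- All estimates at a fixed stock level, in terms of `T = N(S-1)+1` and the length
`L = c_s √(T log T)` of the flexing window. -/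
lemma static_bounds {N : ℕ} [NeZero N] (hN : 2 ≤ N) {q : ℝ} (hq0 : 0 < q) (hq1 : q ≤ 1)
    {S T : ℕ} (hS2 : 2 ≤ S) (hT : T = N * (S - 1) + 1) {L : ℝ}
    (hL : L = csOpaque N q * Real.sqrt ((T : ℝ) * Real.log (T : ℝ)))
    (hLT : L ≤ T) (hL6 : 6 * (N : ℝ) ≤ L) (hlog : 9 * N / 16 ≤ q / 2 * Real.log T) :
    (L / (6 * N) * (q / 2) ≤ staticED N q S ∧ staticED N q S ≤ L + 1) ∧
      ((S : ℝ) ≤ staticER N q S ∧ staticER N q S ≤ T) := by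
  have hNpos : (0 : ℝ) < N := by positivity
  have hST : S ≤ T := by
    rw [hT]
    obtain ⟨S, rfl⟩ : ∃ S', S = S' + 1 := ⟨S - 1, by omega⟩
    simp only [Nat.add_sub_cancel]
    nlinarith
  have hTS : (T : ℝ) ≤ N * S := by
    have : T ≤ N * S := by
      rw [hT]
      obtain ⟨S, rfl⟩ : ∃ S', S = S' + 1 := ⟨S - 1, by omega⟩
      simp only [Nat.add_sub_cancel]
      nlinarith
    exact_mod_cast this
  have hTpos : (0 : ℝ) < T := by exact_mod_cast (by omega : 0 < T)
  have hc := four_mul_le_csOpaque hN hq0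
  have hlogpos : 0 < Real.log T := by
    by_contra hneg
    push Not at hneg
    have : q / 2 * Real.log T ≤ 0 := mul_nonpos_of_nonneg_of_nonpos (by positivity) hneg
    have : 0 < 9 * (N : ℝ) / 16 := by positivity
    linarith
  have hLpos : 0 < L := by linarith [(by positivity : 0 < 6 * (N : ℝ))]
  have hLsq : L ^ 2 = csOpaque N q ^ 2 * (T * Real.log T) := by
    rw [hL, mul_pow, Real.sq_sqrt (by positivity)]
  unfold staticED staticER
  rw [← hT]
  set dec := lateDec N T (csOpaque N q) with hdec
  set k : ℕ := ⌈(T : ℝ) - L - 1⌉₊ with hk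
  have hearly : ∀ xs : Fin T → Arrival N, ∀ s < k, ∀ x, dec xs s x = false := by
    intro xs s hs x
    have := Nat.lt_ceil.1 hs
    simp only [hdec, lateDec, ← hL]
    rw [if_neg (by linarith)]
  have hlate : ∀ (xs : Fin T → Arrival N) s, k ≤ s → ∀ x, dec xs s x = true := by
    intro xs s hs x
    have := Nat.ceil_le.1 hs
    simp only [hdec, lateDec, ← hL]
    rw [if_pos (by linarith)]
  have hkle : (k : ℝ) ≤ T - L := by
    rcases le_total 0 ((T : ℝ) - L - 1) with h | h
    · linarith [Nat.ceil_lt_add_one h]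
    · rw [hk, Nat.ceil_eq_zero.2 h]
      simpa using hLT
  have hkge : (T : ℝ) - L - 1 ≤ k := Nat.le_ceil _
  refine ⟨⟨?_, ?_⟩, ?_, ?_⟩
  · set m : ℕ := ⌊L / (3 * N)⌋₊ with hm
    have hmle : (m : ℝ) ≤ L / (3 * N) := Nat.floor_le (by positivity)
    have hmge : L / (6 * N) ≤ m := by
      have h1 : L / (3 * N) < m + 1 := Nat.lt_floor_add_one _
      have h2 : L / (3 * N) = L / (6 * N) + L / (6 * N) := by
        field_simp
        norm_num
      have h3 : 1 ≤ L / (6 * N) := by rw [le_div_iff₀ (by positivity)]; linarith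
      linarith
    have hmL : (m : ℝ) ≤ L := hmle.trans (div_le_self hLpos.le (by
      have : (2 : ℝ) ≤ N := by exact_mod_cast hN
      linarith))
    have hkm : k + m ≤ T := by
      have : (k : ℝ) + m ≤ T := by linarith
      exact_mod_cast this
    have hS : (k : ℝ) / N + L / (3 * N) + m ≤ S := by
      have h1 : (k : ℝ) / N ≤ (N * S - L) / N := by gcongr; linarith
      have h2 : (N * S - L) / N = S - 3 * (L / (3 * N)) := by field_simp
      have : 0 ≤ L / (3 * N) := by positivity
      linarith
    have h := expec_cycleFlexCount_ge hN hq0 hq1 dec (by positivity) hkm hearly hlate hS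
    refine le_trans ?_ h
    have hvar : (N : ℝ) * k / (L / (3 * N)) ^ 2 ≤ q / 2 := by
      rw [div_le_iff₀ (by positivity), div_pow, hLsq, mul_div_assoc', le_div_iff₀ (by positivity)]
      have hkT : (k : ℝ) ≤ T := by linarith
      have hc2 : (4 * (N : ℝ)) ^ 2 ≤ csOpaque N q ^ 2 := by gcongr
      calc (N : ℝ) * k * (3 * N) ^ 2 ≤ N * T * (3 * N) ^ 2 := by gcongr
        _ = (4 * (N : ℝ)) ^ 2 * T * (9 * N / 16) := by ring
        _ ≤ csOpaque N q ^ 2 * T * (q / 2 * Real.log T) := by gcongr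
        _ = q / 2 * (csOpaque N q ^ 2 * (T * Real.log T)) := by ring
    have : q / 2 ≤ q - (N : ℝ) * k / (L / (3 * N)) ^ 2 := by linarith
    gcongr
  · calc _ ≤ expec N T q (fun _ => L + 1) := expec_mono hq0 hq1 fun xs => by
          have h := cycleFlexCount_le (S := S) dec xs (hearly xs)
          have hkT : k ≤ T := by
            have : (k : ℝ) ≤ T := by linarith
            exact_mod_cast this
          have h' : (cycleFlexCount N T dec S xs : ℝ) ≤ T - k := by
            rw [← Nat.cast_sub hkT]
            exact_mod_cast h
          linarith
      _ = L + 1 := expec_const hN T q _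
  · calc (S : ℝ) = expec N T q (fun _ => (S : ℝ)) := (expec_const hN T q _).symm
      _ ≤ _ := expec_mono hq0 hq1 fun xs => by
          exact_mod_cast stock_le_hitTime dec xs hST
  · calc _ ≤ expec N T q (fun _ => (T : ℝ)) := expec_mono hq0 hq1 fun xs => by
          exact_mod_cast hitTime_le S _
      _ = T := expec_const hN T q _

/-! ### Asymptotics -/

open Filter Topology in
/-- The hypotheses of `static_bounds` hold for all large horizons. -/
lemma eventually_static {c : ℝ} (hc : 0 < c) (A B : ℝ) :
    ∀ᶠ T : ℕ in atTop, c * Real.sqrt ((T : ℝ) * Real.log (T : ℝ)) ≤ T ∧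
      A ≤ c * Real.sqrt ((T : ℝ) * Real.log (T : ℝ)) ∧ B ≤ Real.log (T : ℝ) := by
  have hcast : Tendsto (fun T : ℕ => (T : ℝ)) atTop atTop := tendsto_natCast_atTop_atTop
  have hlog := Real.tendsto_log_atTop.comp hcast
  have hsm := (Real.isLittleO_log_id_atTop.comp_tendsto hcast).bound
    (show (0 : ℝ) < 1 / c ^ 2 by positivity)
  filter_upwards [hsm, hlog.eventually_ge_atTop B, hlog.eventually_ge_atTop 1,
    hcast.eventually_ge_atTop ((A / c) ^ 2), eventually_gt_atTop 0] with T h1 h2 h3 h4 h5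
  simp only [Function.comp, id] at h1 h2 h3
  have hT : (0 : ℝ) < T := by exact_mod_cast h5
  rw [Real.norm_of_nonneg (by linarith), Real.norm_of_nonneg hT.le] at h1
  refine ⟨?_, ?_, h2⟩
  · have h : Real.sqrt ((T : ℝ) * Real.log T) ≤ T / c := by
      apply Real.sqrt_le_iff.2 ⟨by positivity, ?_⟩
      calc (T : ℝ) * Real.log T ≤ T * (1 / c ^ 2 * T) := by gcongr
        _ = (T / c) ^ 2 := by ring
    rw [le_div_iff₀ hc] at h
    linarith
  · have h : A / c ≤ Real.sqrt ((T : ℝ) * Real.log T) := by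
      apply Real.le_sqrt_of_sq_le
      nlinarith
    rw [div_le_iff₀ hc] at h
    linarith

/-- **Proposition 11(iii)** (discount rate of the static opaque selling policy): there
exist constants `0 < c₁ ≤ c₂` (depending only on `N, q`) and `S₀` such that for all
`S ≥ S₀`: `c₁ q √((log S)/S) ≤ E[D^s]/E[R^s] ≤ c₂ q √((log S)/S)`. -/
theorem static_opaque_discount_rate (N : ℕ) [NeZero N] (hN : 2 ≤ N) (q : ℝ)
    (hq0 : 0 < q) (hq1 : q ≤ 1) :
    ∃ c₁ c₂ : ℝ, 0 < c₁ ∧ c₁ ≤ c₂ ∧ ∃ S₀ : ℕ, ∀ S : ℕ, S₀ ≤ S →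
      c₁ * q * Real.sqrt (Real.log (S : ℝ) / (S : ℝ)) ≤ staticED N q S / staticER N q S ∧
      staticED N q S / staticER N q S ≤
        c₂ * q * Real.sqrt (Real.log (S : ℝ) / (S : ℝ)) := by
  have hNpos : (0 : ℝ) < N := by positivity
  have hN1 : (2 : ℝ) ≤ N := by exact_mod_cast hN
  have hcs := four_mul_le_csOpaque hN hq0
  set c := csOpaque N q with hc
  have hcpos : 0 < c := by linarith
  obtain ⟨T₀, hT₀⟩ := Filter.eventually_atTop.1
    (eventually_static hcpos (6 * N) (9 * N / (8 * q)))
  refine ⟨c / (12 * N ^ 2), 4 * c * N / q, by positivity, ?_, T₀ + N + 2, fun S hS => ?_⟩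
  · calc c / (12 * N ^ 2) ≤ c / 1 := by gcongr; nlinarith
      _ ≤ 4 * c * N / q := by
        rw [div_one, le_div_iff₀ hq0]
        nlinarith [mul_pos hcpos hq0]
  obtain ⟨T, hT⟩ : ∃ T, T = N * (S - 1) + 1 := ⟨_, rfl⟩
  have hST : S ≤ T := by
    rw [hT]
    obtain ⟨S, rfl⟩ : ∃ S', S = S' + 1 := ⟨S - 1, by omega⟩
    simp only [Nat.add_sub_cancel]
    nlinarith
  have hTS : (T : ℝ) ≤ N * S := by
    have : T ≤ N * S := by
      rw [hT]
      obtain ⟨S, rfl⟩ : ∃ S', S = S' + 1 := ⟨S - 1, by omega⟩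
      simp only [Nat.add_sub_cancel]
      nlinarith
    exact_mod_cast this
  have hSTr : (S : ℝ) ≤ T := by exact_mod_cast hST
  have hSpos : (0 : ℝ) < S := by exact_mod_cast (by omega : 0 < S)
  have hTpos : (0 : ℝ) < T := by linarith
  have hNS : (N : ℝ) ≤ S := by exact_mod_cast (by omega : N ≤ S)
  have hlogS : 0 < Real.log S := Real.log_pos (by linarith)
  have hlogST : Real.log S ≤ Real.log T := Real.log_le_log hSpos hSTr
  have hlogTS : Real.log T ≤ 2 * Real.log S := by
    calc Real.log T ≤ Real.log (S * S) := Real.log_le_log hTpos (hTS.trans (by gcongr))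
      _ = 2 * Real.log S := by rw [Real.log_mul hSpos.ne' hSpos.ne']; ring
  obtain ⟨h1, h2, h3⟩ := hT₀ T (by omega)
  obtain ⟨⟨hDl, hDu⟩, hRl, hRu⟩ := static_bounds hN hq0 hq1 (by omega : 2 ≤ S) hT rfl
    h1 h2 (by
      rw [div_le_iff₀ (by positivity)] at h3
      linarith)
  rw [← hc] at hDl hDu
  set W := Real.sqrt ((T : ℝ) * Real.log T) with hW
  set V := Real.sqrt (Real.log (S : ℝ) / S) with hV
  have hWsq : W ^ 2 = T * Real.log T := Real.sq_sqrt (by positivity)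
  have hVsq : V ^ 2 = Real.log S / S := Real.sq_sqrt (by positivity)
  have hW0 : 0 ≤ W := Real.sqrt_nonneg _
  have hV0 : 0 ≤ V := Real.sqrt_nonneg _
  have hER : 0 < staticER N q S := by linarith
  have hED : 0 ≤ staticED N q S := le_trans (by positivity) hDl
  constructor
  · have hVW : V ≤ N * W / T := by
      refine abs_le_of_sq_le_sq' ?_ (by positivity) |>.2
      calc V ^ 2 = Real.log S / S := hVsq
        _ ≤ Real.log T / (T / N) := by
          have : (T : ℝ) / N ≤ S := by rw [div_le_iff₀ hNpos]; linarith
          gcongr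
        _ = N * (Real.log T / T) := by field_simp
        _ ≤ N ^ 2 * (Real.log T / T) := by
          have : (N : ℝ) ≤ N ^ 2 := by nlinarith
          gcongr
        _ = (N * W / T) ^ 2 := by
          rw [div_pow, mul_pow, hWsq]
          field_simp
    calc c / (12 * N ^ 2) * q * V ≤ c / (12 * N ^ 2) * q * (N * W / T) := by gcongr
      _ = c * W / (6 * N) * (q / 2) / T := by
        field_simp
        ring
      _ ≤ staticED N q S / T := by gcongr
      _ ≤ staticED N q S / staticER N q S := by gcongr
  · have hWV : W ≤ 2 * N * S * V := by
      refine abs_le_of_sq_le_sq' ?_ (by positivity) |>.2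
      calc W ^ 2 = T * Real.log T := hWsq
        _ ≤ (N * S) * (2 * Real.log S) := by gcongr
        _ ≤ (2 * N * S) ^ 2 * (Real.log S / S) := by
          have e : (2 * N * S) ^ 2 * (Real.log S / S) = 4 * N ^ 2 * (S * Real.log S) := by
            field_simp
            norm_num
          have : 0 < S * Real.log S := by positivity
          have hN2 : 2 * (N : ℝ) ≤ 4 * N ^ 2 := by nlinarith
          rw [e]
          calc (N : ℝ) * S * (2 * Real.log S) = 2 * N * (S * Real.log S) := by ring
            _ ≤ 4 * N ^ 2 * (S * Real.log S) := by gcongr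
        _ = (2 * N * S * V) ^ 2 := by rw [mul_pow _ V, hVsq]
    calc staticED N q S / staticER N q S ≤ (c * W + 1) / S := by gcongr
      _ ≤ (2 * (c * (2 * N * S * V))) / S := by
        have : c * W ≤ c * (2 * N * S * V) := by gcongr
        gcongr
        linarith
      _ = 4 * c * N / q * q * V := by
        field_simp
        ring
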